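/- arXiv:2206.09567 — 4 statements merged into one kernel-verified Lean document; each statement's English description precedes it below -/
import Mathlib

section
/- (Table 1 entry: 2-WL and local 2-FWL are incomparable in link discriminating power.) (i) There exist unlabeled graphs G, G' and target links (p,q) in G and (p',q') in G' that are 2-FWL_L-indistinguishable but not 2-WL-indistinguishable. (ii) There exist unlabeled graphs H, H' and target links (r,s) in H and (r',s') in H' that are 2-WL-indistinguishable but not 2-FWL_L-indistinguishable. Hence neither of 2-WL and 2-FWL_L has equal or stronger link discriminating power than the other. -/
open scoped Classical

universe u v

/-- The common 1-WL color type over label set `σ`: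
`C 0 = σ`, `C (t+1) = C t × Multiset (C t)`. -/
def WL1Color (σ : Type u) : ℕ → Type u
  | 0 => σ
  | t + 1 => WL1Color σ t × Multiset (WL1Color σ t)

/-- The 1-WL coloring of a labeled graph `(G, l)`:
`c¹⁰(v) = l v`, `c¹ᵗ⁺¹(v) = (c¹ᵗ(v), {{c¹ᵗ(u) : u ∈ N(v)}})`. -/
noncomputable def wl1 {σ : Type u} {V : Type v} [Fintype V] (G : SimpleGraph V)
    (l : V → σ) : (t : ℕ) → V → WL1Color σ t
  | 0 => l
  | t + 1 => fun v => (wl1 G l t v, (G.neighborFinset v).val.map (wl1 G l t))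

/-- The type of initial pair colors over label set `σ`. -/
def PairColor0 (σ : Type u) : Type u := σ × σ × Bool × Bool

/-- Initial pair color `c⁰(p,q) = (l p, l q, 1_{(p,q)∈E}, 1_{p=q})`. -/
noncomputable def pairInit {σ : Type u} {V : Type v} (G : SimpleGraph V) (l : V → σ)
    (e : V × V) : PairColor0 σ :=
  (l e.1, l e.2, decide (G.Adj e.1 e.2), decide (e.1 = e.2))

/-- The common (plain/local) 2-WL pair color type over label set `σ`. -/
def WL2Color (σ : Type u) : ℕ → Type u
  | 0 => PairColor0 σ
  | t + 1 => WL2Color σ t × Multiset (WL2Color σ t) × Multiset (WL2Color σ t)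

/-- The plain 2-WL coloring:
`c₂ᵗ⁺¹(p,q) = (c₂ᵗ(p,q), {{c₂ᵗ(u,q) : u ∈ V}}, {{c₂ᵗ(p,v) : v ∈ V}})`. -/
noncomputable def wl2 {σ : Type u} {V : Type v} [Fintype V] (G : SimpleGraph V)
    (l : V → σ) : (t : ℕ) → V × V → WL2Color σ t
  | 0 => pairInit G l
  | t + 1 => fun e =>
      (wl2 G l t e,
        Finset.univ.val.map (fun u => wl2 G l t (u, e.2)),
        Finset.univ.val.map (fun v => wl2 G l t (e.1, v)))

/-- The local 2-WL (2-WL_L) coloring: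
`cₗᵗ⁺¹(p,q) = (cₗᵗ(p,q), {{cₗᵗ(u,q) : (u,q) ∈ E}}, {{cₗᵗ(p,v) : (p,v) ∈ E}})`. -/
noncomputable def wl2L {σ : Type u} {V : Type v} [Fintype V] (G : SimpleGraph V)
    (l : V → σ) : (t : ℕ) → V × V → WL2Color σ t
  | 0 => pairInit G l
  | t + 1 => fun e =>
      (wl2L G l t e,
        (Finset.univ.filter (fun u => G.Adj u e.2)).val.map (fun u => wl2L G l t (u, e.2)),
        (Finset.univ.filter (fun v => G.Adj e.1 v)).val.map (fun v => wl2L G l t (e.1, v)))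

/-- The common (plain/local) 2-FWL pair color type over label set `σ`. -/
def FWLColor (σ : Type u) : ℕ → Type u
  | 0 => PairColor0 σ
  | t + 1 => FWLColor σ t × Multiset (FWLColor σ t × FWLColor σ t)

/-- The 2-FWL coloring:
`c_Fᵗ⁺¹(p,q) = (c_Fᵗ(p,q), {{(c_Fᵗ(u,q), c_Fᵗ(p,u)) : u ∈ V}})`. -/
noncomputable def fwl2 {σ : Type u} {V : Type v} [Fintype V] (G : SimpleGraph V)
    (l : V → σ) : (t : ℕ) → V × V → FWLColor σ t
  | 0 => pairInit G l
  | t + 1 => fun e =>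
      (fwl2 G l t e,
        Finset.univ.val.map (fun u => (fwl2 G l t (u, e.2), fwl2 G l t (e.1, u))))

/-- The local 2-FWL (2-FWL_L) coloring:
`c_FLᵗ⁺¹(p,q) = (c_FLᵗ(p,q), {{(c_FLᵗ(u,q), c_FLᵗ(p,u)) : (u,q) ∈ E or (p,u) ∈ E}})`. -/
noncomputable def fwl2L {σ : Type u} {V : Type v} [Fintype V] (G : SimpleGraph V)
    (l : V → σ) : (t : ℕ) → V × V → FWLColor σ t
  | 0 => pairInit G l
  | t + 1 => fun e =>
      (fwl2L G l t e,
        (Finset.univ.filter (fun u => G.Adj u e.2 ∨ G.Adj e.1 u)).val.map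
          (fun u => (fwl2L G l t (u, e.2), fwl2L G l t (e.1, u))))

/-- A target link: an ordered pair of distinct, non-adjacent vertices. -/
def IsTargetLink {V : Type v} (G : SimpleGraph V) (e : V × V) : Prop :=
  e.1 ≠ e.2 ∧ ¬ G.Adj e.1 e.2

/-- `(p,q)` in `(G,l)` and `(p',q')` in `(G',l')` are 1-WL-indistinguishable. -/
noncomputable def WL1Indist {σ : Type u} {V V' : Type v} [Fintype V] [Fintype V']
    (G : SimpleGraph V) (l : V → σ) (G' : SimpleGraph V') (l' : V' → σ)
    (e : V × V) (e' : V' × V') : Prop :=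
  ∀ t : ℕ, wl1 G l t e.1 = wl1 G' l' t e'.1 ∧ wl1 G l t e.2 = wl1 G' l' t e'.2

/-- 2-WL-indistinguishability. -/
noncomputable def WL2Indist {σ : Type u} {V V' : Type v} [Fintype V] [Fintype V']
    (G : SimpleGraph V) (l : V → σ) (G' : SimpleGraph V') (l' : V' → σ)
    (e : V × V) (e' : V' × V') : Prop :=
  ∀ t : ℕ, wl2 G l t e = wl2 G' l' t e'

/-- Local 2-WL (2-WL_L) indistinguishability. -/
noncomputable def WL2LIndist {σ : Type u} {V V' : Type v} [Fintype V] [Fintype V']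
    (G : SimpleGraph V) (l : V → σ) (G' : SimpleGraph V') (l' : V' → σ)
    (e : V × V) (e' : V' × V') : Prop :=
  ∀ t : ℕ, wl2L G l t e = wl2L G' l' t e'

/-- 2-FWL-indistinguishability. -/
noncomputable def FWL2Indist {σ : Type u} {V V' : Type v} [Fintype V] [Fintype V']
    (G : SimpleGraph V) (l : V → σ) (G' : SimpleGraph V') (l' : V' → σ)
    (e : V × V) (e' : V' × V') : Prop :=
  ∀ t : ℕ, fwl2 G l t e = fwl2 G' l' t e'

/-- Local 2-FWL (2-FWL_L) indistinguishability. -/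
noncomputable def FWL2LIndist {σ : Type u} {V V' : Type v} [Fintype V] [Fintype V']
    (G : SimpleGraph V) (l : V → σ) (G' : SimpleGraph V') (l' : V' → σ)
    (e : V × V) (e' : V' × V') : Prop :=
  ∀ t : ℕ, fwl2L G l t e = fwl2L G' l' t e'

/-- The 0/1 labeling trick: augment the labeling with indicator of membership in `{p, q}`. -/
noncomputable def label01 {σ : Type u} {V : Type v} (l : V → σ) (e : V × V) :
    V → σ × Bool :=
  fun v => (l v, decide (v = e.1 ∨ v = e.2))

/-- 1-WL-with-0/1-labeling indistinguishability of target links. -/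
noncomputable def WL1LabelIndist {σ : Type u} {V V' : Type v} [Fintype V] [Fintype V']
    (G : SimpleGraph V) (l : V → σ) (G' : SimpleGraph V') (l' : V' → σ)
    (e : V × V) (e' : V' × V') : Prop :=
  WL1Indist G (label01 l e) G' (label01 l' e') e e'

/-- The number of common neighbors of `p` and `q` in `G`. -/
noncomputable def commonNbrCount {V : Type v} [Fintype V] (G : SimpleGraph V)
    (e : V × V) : ℕ :=
  (G.neighborFinset e.1 ∩ G.neighborFinset e.2).card

/-!
Local 2-FWL never looks beyond the connected components of the two endpoints, while a single round
of 2-WL counts all vertices: two isolated vertices are separated by 2-WL, but not by local 2-FWL,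
from the same two vertices together with a third isolated one.

Conversely, on a regular graph with constant labels 2-WL never refines the initial pair colors,
since every row and every column of the color matrix contains each color equally often. It therefore
cannot separate pairs at distance 2 and at distance 3 in the 6-cycle. Local 2-FWL separates them
after one round: the endpoints have a common neighbor only in the first case, so the union of their
neighborhoods has 3 vertices there and 4 in the second case.
-/

section InitialColor

variable {σ : Type u} {V : Type v} {G : SimpleGraph V}

theorem pairInit_self (l : V → σ) (v : V) : pairInit G l (v, v) = (l v, l v, false, true) := by
  simp only [pairInit, G.irrefl, decide_true, decide_false]
  rfl

theorem pairInit_of_adj (l : V → σ) {v w : V} (h : G.Adj v w) :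
    pairInit G l (v, w) = (l v, l w, true, false) := by
  simp only [pairInit, h, h.ne, decide_true, decide_false]
  rfl

theorem isTargetLink_iff_compl_adj {v w : V} : IsTargetLink G (v, w) ↔ Gᶜ.Adj v w :=
  (G.compl_adj v w).symm

theorem IsTargetLink.pairInit_eq (l : V → σ) {e : V × V} (h : IsTargetLink G e) :
    pairInit G l e = (l e.1, l e.2, false, false) := by
  simp only [pairInit, h.1, h.2, decide_false]
  rfl

end InitialColor

section LocalFWL

variable {σ : Type u} {V V' : Type*} [Fintype V] [Fintype V'] {G : SimpleGraph V}
  {G' : SimpleGraph V'}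

theorem map_filter_adj_or_adj_eq_of_adj_mem_range (φ : G ↪g G')
    (hφ : ∀ ⦃v w⦄, G'.Adj (φ v) w → w ∈ Set.range φ) (p q : V) :
    (Finset.univ.filter fun u => G.Adj u q ∨ G.Adj p u).map φ.toEmbedding =
      Finset.univ.filter fun u => G'.Adj u (φ q) ∨ G'.Adj (φ p) u := by
  ext w
  simp only [Finset.mem_map, Finset.mem_filter_univ]
  constructor
  · rintro ⟨u, hu, rfl⟩
    exact hu.imp φ.map_adj_iff.mpr φ.map_adj_iff.mpr
  · intro hw
    obtain ⟨u, rfl⟩ : w ∈ Set.range φ := hw.elim (fun h => hφ h.symm) fun h => hφ h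
    exact ⟨u, hw.imp φ.map_adj_iff.mp φ.map_adj_iff.mp, rfl⟩

theorem fwl2L_map_eq_of_adj_mem_range (φ : G ↪g G')
    (hφ : ∀ ⦃v w⦄, G'.Adj (φ v) w → w ∈ Set.range φ) (l' : V' → σ) (t : ℕ) (e : V × V) :
    fwl2L G' l' t (e.map φ φ) = fwl2L G (l' ∘ φ) t e := by
  induction t generalizing e with
  | zero =>
    simp only [fwl2L, pairInit, Prod.map_fst, Prod.map_snd, φ.map_adj_iff, φ.injective.eq_iff]
    rfl
  | succ t ih =>
    refine Prod.ext (ih e) ?_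
    simp only [fwl2L, Prod.map_fst, Prod.map_snd]
    rw [← map_filter_adj_or_adj_eq_of_adj_mem_range φ hφ, Finset.map_val, Multiset.map_map]
    exact Multiset.map_congr rfl fun u _ => Prod.ext (ih (u, e.2)) (ih (e.1, u))

end LocalFWL

theorem FWL2LIndist.card_filter_adj_or_adj_eq {σ : Type u} {V V' : Type v} [Fintype V]
    [Fintype V'] {G : SimpleGraph V} {l : V → σ} {G' : SimpleGraph V'} {l' : V' → σ}
    {e : V × V} {e' : V' × V'} [DecidableRel G.Adj] [DecidableRel G'.Adj]
    (h : FWL2LIndist G l G' l' e e') :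
    (Finset.univ.filter fun u => G.Adj u e.2 ∨ G.Adj e.1 u).card =
      (Finset.univ.filter fun u => G'.Adj u e'.2 ∨ G'.Adj e'.1 u).card := by
  have card_snd_eq := congrArg (fun γ => γ.2.card) (h 1)
  simp only [fwl2L, Multiset.card_map, Finset.card_val] at card_snd_eq
  convert card_snd_eq

theorem WL2Indist.card_eq {σ : Type u} {V V' : Type v} [Fintype V] [Fintype V']
    {G : SimpleGraph V} {l : V → σ} {G' : SimpleGraph V'} {l' : V' → σ}
    {e : V × V} {e' : V' × V'} (h : WL2Indist G l G' l' e e') :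
    Fintype.card V = Fintype.card V' :=
  calc Fintype.card V = (wl2 G l 1 e).2.1.card := (Multiset.card_map _ _).symm
    _ = (wl2 G' l' 1 e').2.1.card := by rw [h 1]
    _ = Fintype.card V' := Multiset.card_map _ _

section RegularGraph

variable {V : Type v} [Fintype V] (G : SimpleGraph V) [DecidableRel G.Adj]

theorem univ_val_eq_cons_neighborFinset_add_compl (v : V) :
    Finset.univ.val = v ::ₘ ((G.neighborFinset v).val + (Gᶜ.neighborFinset v).val) := by
  have neighbors_disjoint : Disjoint (G.neighborFinset v) (Gᶜ.neighborFinset v) :=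
    Set.disjoint_toFinset.mpr (G.compl_neighborSet_disjoint v)
  have not_mem_union :
      v ∉ (G.neighborFinset v).disjUnion (Gᶜ.neighborFinset v) neighbors_disjoint := by
    simp
  refine congrArg Finset.val (?_ : Finset.univ = Finset.cons v _ not_mem_union)
  ext w
  simp only [Finset.mem_univ, Finset.mem_cons, Finset.mem_disjUnion,
    SimpleGraph.mem_neighborFinset, SimpleGraph.compl_adj]
  tauto

variable {G}

theorem map_univ_val_eq_of_isRegularOfDegree {α : Type*} {d : ℕ} (hG : G.IsRegularOfDegree d)
    {v : V} {f : V → α} {s a b : α} (hself : f v = s) (hadj : ∀ w, G.Adj v w → f w = a)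
    (hcompl : ∀ w, Gᶜ.Adj v w → f w = b) :
    Finset.univ.val.map f =
      s ::ₘ (Multiset.replicate d a + Multiset.replicate (Fintype.card V - 1 - d) b) := by
  have map_neighbors : (G.neighborFinset v).val.map f = Multiset.replicate d a := by
    rw [Multiset.map_congr rfl fun w hw => hadj w ((G.mem_neighborFinset v w).mp hw),
      Multiset.map_const', Finset.card_val, G.card_neighborFinset_eq_degree, hG.degree_eq]
  have map_compl_neighbors : (Gᶜ.neighborFinset v).val.map f =
      Multiset.replicate (Fintype.card V - 1 - d) b := by
    rw [Multiset.map_congr rfl fun w hw => hcompl w ((Gᶜ.mem_neighborFinset v w).mp hw),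
      Multiset.map_const', Finset.card_val, Gᶜ.card_neighborFinset_eq_degree,
      hG.compl.degree_eq]
  rw [univ_val_eq_cons_neighborFinset_add_compl G v, Multiset.map_cons, Multiset.map_add,
    hself, map_neighbors, map_compl_neighbors]

/-- The 2-WL color after `t` rounds, as a function of the initial pair color, in a `d`-regular
graph on `n` vertices all labeled `c`. The multiset `line` is shared by all rows and all columns of
the color matrix, each of which contains one diagonal pair, `d` edges and `n - 1 - d` non-edges. -/
def regularWL2Color {σ : Type u} (c : σ) (n d : ℕ) : (t : ℕ) → PairColor0 σ → WL2Color σ t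
  | 0 => id
  | t + 1 => fun x =>
    let γ := regularWL2Color c n d t
    let line := γ (c, c, false, true) ::ₘ
      (Multiset.replicate d (γ (c, c, true, false)) +
        Multiset.replicate (n - 1 - d) (γ (c, c, false, false)))
    (γ x, line, line)

theorem wl2_eq_regularWL2Color {σ : Type u} {d : ℕ} (hG : G.IsRegularOfDegree d) (c : σ) (t : ℕ)
    (e : V × V) :
    wl2 G (fun _ => c) t e =
      regularWL2Color c (Fintype.card V) d t (pairInit G (fun _ => c) e) := by
  induction t generalizing e with
  | zero => rfl
  | succ t ih =>
    let γ := regularWL2Color c (Fintype.card V) d t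
    refine Prod.ext (ih e) (Prod.ext ?_ ?_)
    · refine map_univ_val_eq_of_isRegularOfDegree hG (v := e.2) ?_ (fun u h => ?_) fun u h => ?_
      · exact (ih _).trans (congrArg γ (pairInit_self _ e.2))
      · exact (ih _).trans (congrArg γ (pairInit_of_adj _ h.symm))
      · exact (ih _).trans (congrArg γ ((isTargetLink_iff_compl_adj.mpr h.symm).pairInit_eq _))
    · refine map_univ_val_eq_of_isRegularOfDegree hG (v := e.1) ?_ (fun u h => ?_) fun u h => ?_
      · exact (ih _).trans (congrArg γ (pairInit_self _ e.1))
      · exact (ih _).trans (congrArg γ (pairInit_of_adj _ h))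
      · exact (ih _).trans (congrArg γ ((isTargetLink_iff_compl_adj.mpr h).pairInit_eq _))

theorem IsTargetLink.wl2Indist_of_isRegularOfDegree {σ : Type u} {V' : Type v} [Fintype V']
    {G' : SimpleGraph V'} [DecidableRel G'.Adj] {d : ℕ} {e : V × V} {e' : V' × V'}
    (he : IsTargetLink G e) (he' : IsTargetLink G' e') (hG : G.IsRegularOfDegree d)
    (hG' : G'.IsRegularOfDegree d) (hcard : Fintype.card V = Fintype.card V') (c : σ) :
    WL2Indist G (fun _ => c) G' (fun _ => c) e e' := fun t => by
  rw [wl2_eq_regularWL2Color hG, wl2_eq_regularWL2Color hG', he.pairInit_eq, he'.pairInit_eq,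
    hcard]

end RegularGraph

/-- Table 1 entry: 2-WL and local 2-FWL are incomparable in link discriminating power. -/
theorem wl2_incomparable_local_fwl2 :
    (∃ (n n' : ℕ) (G : SimpleGraph (Fin n)) (G' : SimpleGraph (Fin n'))
        (e : Fin n × Fin n) (e' : Fin n' × Fin n'),
        IsTargetLink G e ∧ IsTargetLink G' e' ∧
        FWL2LIndist G (fun _ => ()) G' (fun _ => ()) e e' ∧
        ¬ WL2Indist G (fun _ => ()) G' (fun _ => ()) e e') ∧
    (∃ (m m' : ℕ) (H : SimpleGraph (Fin m)) (H' : SimpleGraph (Fin m'))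
        (f : Fin m × Fin m) (f' : Fin m' × Fin m'),
        IsTargetLink H f ∧ IsTargetLink H' f' ∧
        WL2Indist H (fun _ => ()) H' (fun _ => ()) f f' ∧
        ¬ FWL2LIndist H (fun _ => ()) H' (fun _ => ()) f f') := by
  constructor
  · have isTargetLink_bot (n : ℕ) : IsTargetLink (⊥ : SimpleGraph (Fin (n + 2))) (0, 1) := by
      simp [IsTargetLink]
    let addVertex : (⊥ : SimpleGraph (Fin 2)) ↪g (⊥ : SimpleGraph (Fin 3)) :=
      ⟨Fin.castSuccEmb, Iff.rfl⟩
    refine ⟨2, 3, ⊥, ⊥, (0, 1), (0, 1), isTargetLink_bot 0, isTargetLink_bot 1, fun t => ?_,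
      fun h => absurd h.card_eq (by decide)⟩
    exact (fwl2L_map_eq_of_adj_mem_range addVertex (fun _ _ h => h.elim) (fun _ => ()) t
      (0, 1)).symm
  · have isTargetLink_two : IsTargetLink (SimpleGraph.cycleGraph 6) (0, 2) := by
      constructor <;> decide
    have isTargetLink_three : IsTargetLink (SimpleGraph.cycleGraph 6) (0, 3) := by
      constructor <;> decide
    have cycle_regular : (SimpleGraph.cycleGraph 6).IsRegularOfDegree 2 :=
      fun _ => SimpleGraph.cycleGraph_degree_three_le
    exact ⟨6, 6, .cycleGraph 6, .cycleGraph 6, (0, 2), (0, 3), isTargetLink_two, isTargetLink_three,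
      isTargetLink_two.wl2Indist_of_isRegularOfDegree isTargetLink_three cycle_regular
        cycle_regular rfl (),
      fun h => absurd h.card_filter_adj_or_adj_eq (by decide)⟩
end

section
/- (Local 2-FWL can count common neighbors.) For every label set Σ, all labeled graphs G = (V,E,l) and G' = (V',E',l') over Σ, and all ordered pairs (p,q) ∈ V × V and (p',q') ∈ V' × V': if the local 2-FWL colors at iteration 1 agree, i.e. c_FL¹(p,q) = c_FL¹(p',q'), then the number of common neighbors of p and q in G equals the number of common neighbors of p' and q' in G', i.e. |N(p) ∩ N(q)| = |N(p') ∩ N(q')|. In particular, 2-FWL_L-indistinguishable links have equal numbers of common neighbors. -/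
open scoped Classical

universe u v

namespace FWLColor

/-- The colors of edges, among all pair colors of iteration `t`. Refinement keeps the previous
color as its first component, so the adjacency bit of `pairInit` stays readable at every `t`. -/
def IsEdge {σ : Type u} : {t : ℕ} → FWLColor σ t → Prop
  | 0, c => c.2.2.1 = true
  | _ + 1, c => IsEdge c.1

end FWLColor

section LocalFWL

variable {σ : Type u} {V : Type v} [Fintype V] (G : SimpleGraph V) (l : V → σ)

lemma isEdge_fwl2L_iff (t : ℕ) (e : V × V) :
    (fwl2L G l t e).IsEdge ↔ G.Adj e.1 e.2 := by
  induction t with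
  | zero => exact decide_eq_true_iff
  | succ _ ih => exact ih

lemma commonNbrCount_eq_countP_fwl2L (t : ℕ) (e : V × V) :
    commonNbrCount G e =
      (fwl2L G l (t + 1) e).2.countP (fun c => c.1.IsEdge ∧ c.2.IsEdge) := by
  -- A common neighbor is adjacent to both endpoints, so the local refinement never skips it.
  have filter_eq : ({u | G.Adj u e.2 ∨ G.Adj e.1 u} : Finset V).filter
      (fun u => G.Adj u e.2 ∧ G.Adj e.1 u) = G.neighborFinset e.1 ∩ G.neighborFinset e.2 := by
    ext u
    simp only [Finset.mem_inter, SimpleGraph.mem_neighborFinset, Finset.mem_filter,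
      Finset.mem_univ, true_and, G.adj_comm e.2 u]
    tauto
  simp only [fwl2L, Multiset.countP_map, isEdge_fwl2L_iff, commonNbrCount, ← filter_eq,
    Finset.card_def, Finset.filter_val]

end LocalFWL

/-- Local 2-FWL can count common neighbors: agreement of local 2-FWL colors at iteration 1
forces equal numbers of common neighbors. -/
theorem local_fwl2_counts_common_neighbors :
    ∀ (σ : Type u) (V V' : Type v) [Fintype V] [Fintype V']
      (G : SimpleGraph V) (l : V → σ) (G' : SimpleGraph V') (l' : V' → σ)
      (e : V × V) (e' : V' × V'),
      fwl2L G l 1 e = fwl2L G' l' 1 e' →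
      commonNbrCount G e = commonNbrCount G' e' := by
  intro σ V V' _ _ G l G' l' e e' h
  rw [commonNbrCount_eq_countP_fwl2L G l 0, commonNbrCount_eq_countP_fwl2L G' l' 0, h]
end

section
/- (2-WL is blind on regular graphs: node-level symmetry makes 2-WL unable to detect differences between unconnected link pairs.) Let G = (V,E) and G' = (V',E') be unlabeled graphs that are both d-regular and both have exactly n vertices. Then for every target link (p,q) in G (p ≠ q, (p,q) ∉ E) and every target link (p',q') in G' (p' ≠ q', (p',q') ∉ E'), the links (p,q) and (p',q') are 2-WL-indistinguishable. In particular, within a single d-regular graph, any two non-adjacent pairs of distinct vertices receive identical 2-WL colors at every iteration. -/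
open scoped Classical

universe u v

/-!
Each update of plain 2-WL moves one endpoint of a pair while the other stays fixed, so from `(p, q)`
it sees a vertex `v` only through its color and through whether `v` equals or is adjacent to `p`
(or to `q`). The neighbors of `p` contribute the multiset that 1-WL records at `p`, and the
non-neighbors contribute whatever remains of the multiset of all vertex colors. Hence, for graphs
with equal multisets of 1-WL colors, the 2-WL color of a pair after `t` rounds is determined by the
1-WL colors of its endpoints after `t` rounds, together with their equality and adjacency.
On regular graphs, 1-WL never separates two vertices.
-/

theorem multiset_map_eq_map_of_imp {α β γ δ : Type*} {s : Multiset α} {t : Multiset β}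
    {f : α → γ} {g : β → γ} {f' : α → δ} {g' : β → δ} (h : s.map f = t.map g)
    (himp : ∀ a ∈ s, ∀ b ∈ t, f a = g b → f' a = g' b) : s.map f' = t.map g' := by
  rw [← Multiset.rel_eq, Multiset.rel_map] at h ⊢
  exact h.mono himp

theorem multiset_map_eq_map_of_card_eq {α β γ : Type*} {s : Multiset α} {t : Multiset β}
    {f : α → γ} {g : β → γ} (hcard : s.card = t.card) (h : ∀ a b, f a = g b) :
    s.map f = t.map g :=
  multiset_map_eq_map_of_imp (f := fun _ => ()) (g := fun _ => ()) (by simp [hcard])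
    fun a _ b _ _ => h a b

section PairInit

variable {σ V V' : Type*} {G : SimpleGraph V} {G' : SimpleGraph V'} {l : V → σ} {l' : V' → σ}

theorem pairInit_eq_pairInit_iff {e : V × V} {e' : V' × V'} :
    pairInit G l e = pairInit G' l' e' ↔
      l e.1 = l' e'.1 ∧ l e.2 = l' e'.2 ∧
        (G.Adj e.1 e.2 ↔ G'.Adj e'.1 e'.2) ∧ (e.1 = e.2 ↔ e'.1 = e'.2) := by
  simp only [pairInit, PairColor0, Prod.mk.injEq, decide_eq_decide]

theorem pairInit_swap_eq_pairInit_swap_iff {e : V × V} {e' : V' × V'} :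
    pairInit G l e.swap = pairInit G' l' e'.swap ↔ pairInit G l e = pairInit G' l' e' := by
  simp only [pairInit_eq_pairInit_iff, Prod.fst_swap, Prod.snd_swap, G.adj_comm e.2,
    G'.adj_comm e'.2, eq_comm (a := e.2), eq_comm (a := e'.2), and_left_comm]

variable [Fintype V] [Fintype V'] {p : V} {p' : V'}

theorem univ_val_eq_cons_neighborFinset_add (G : SimpleGraph V) (p : V) :
    (Finset.univ : Finset V).val =
      p ::ₘ ((G.neighborFinset p).val + (Gᶜ.neighborFinset p).val) := by
  have hdisj : Disjoint (G.neighborFinset p) (Gᶜ.neighborFinset p) := by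
    simp +contextual [Finset.disjoint_left]
  have hp : p ∉ (G.neighborFinset p).disjUnion (Gᶜ.neighborFinset p) hdisj := by simp
  rw [← Finset.disjUnion_val _ _ hdisj, ← Finset.cons_val hp, Finset.val_inj]
  ext v
  simp only [Finset.mem_univ, Finset.mem_cons, Finset.mem_disjUnion,
    SimpleGraph.mem_neighborFinset, SimpleGraph.compl_adj]
  tauto

theorem compl_neighborFinset_map_eq
    (huniv : (Finset.univ : Finset V).val.map l = (Finset.univ : Finset V').val.map l')
    (hp : l p = l' p')
    (hnbr : (G.neighborFinset p).val.map l = (G'.neighborFinset p').val.map l') :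
    (Gᶜ.neighborFinset p).val.map l = (G'ᶜ.neighborFinset p').val.map l' := by
  rw [univ_val_eq_cons_neighborFinset_add G p,
    univ_val_eq_cons_neighborFinset_add G' p'] at huniv
  simpa only [Multiset.map_cons, Multiset.map_add, hp, hnbr, Multiset.cons_inj_right,
    add_right_inj] using huniv

theorem univ_map_pairInit_eq
    (huniv : (Finset.univ : Finset V).val.map l = (Finset.univ : Finset V').val.map l')
    (hp : l p = l' p')
    (hnbr : (G.neighborFinset p).val.map l = (G'.neighborFinset p').val.map l') :
    (Finset.univ : Finset V).val.map (fun v => pairInit G l (p, v)) =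
      (Finset.univ : Finset V').val.map (fun v => pairInit G' l' (p', v)) := by
  have hself : pairInit G l (p, p) = pairInit G' l' (p', p') := by
    simp [pairInit_eq_pairInit_iff, hp]
  have hadj : (G.neighborFinset p).val.map (fun v => pairInit G l (p, v)) =
      (G'.neighborFinset p').val.map (fun v => pairInit G' l' (p', v)) :=
    multiset_map_eq_map_of_imp hnbr fun v hv v' hv' h => by
      have hv : G.Adj p v := (G.mem_neighborFinset p v).1 hv
      have hv' : G'.Adj p' v' := (G'.mem_neighborFinset p' v').1 hv'
      exact pairInit_eq_pairInit_iff.2 ⟨hp, h, iff_of_true hv hv', iff_of_false hv.ne hv'.ne⟩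
  have hnonadj : (Gᶜ.neighborFinset p).val.map (fun v => pairInit G l (p, v)) =
      (G'ᶜ.neighborFinset p').val.map (fun v => pairInit G' l' (p', v)) :=
    multiset_map_eq_map_of_imp (compl_neighborFinset_map_eq huniv hp hnbr) fun v hv v' hv' h => by
      obtain ⟨hne, hv⟩ := (G.compl_adj p v).1 ((Gᶜ.mem_neighborFinset p v).1 hv)
      obtain ⟨hne', hv'⟩ := (G'.compl_adj p' v').1 ((G'ᶜ.mem_neighborFinset p' v').1 hv')
      exact pairInit_eq_pairInit_iff.2 ⟨hp, h, iff_of_false hv hv', iff_of_false hne hne'⟩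
  simp only [univ_val_eq_cons_neighborFinset_add G p, univ_val_eq_cons_neighborFinset_add G' p',
    Multiset.map_cons, Multiset.map_add, hself, hadj, hnonadj]

end PairInit

section WeisfeilerLeman

variable {σ V V' : Type*} [Fintype V] [Fintype V']
  {G : SimpleGraph V} {G' : SimpleGraph V'} {l : V → σ} {l' : V' → σ}

theorem wl1_const_eq_of_isRegularOfDegree {d : ℕ} (hG : G.IsRegularOfDegree d)
    (hG' : G'.IsRegularOfDegree d) (a : σ) (t : ℕ) (v : V) (v' : V') :
    wl1 G (fun _ => a) t v = wl1 G' (fun _ => a) t v' := by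
  induction t generalizing v v' with
  | zero => rfl
  | succ t ih =>
    have hdeg : G.degree v = G'.degree v' := (hG v).trans (hG' v').symm
    exact Prod.ext (ih v v') (multiset_map_eq_map_of_card_eq hdeg ih)

theorem wl2_eq_of_pairInit_wl1_eq
    (huniv : ∀ t, (Finset.univ : Finset V).val.map (wl1 G l t) =
      (Finset.univ : Finset V').val.map (wl1 G' l' t)) (t : ℕ) (e : V × V) (e' : V' × V')
    (he : pairInit G (wl1 G l t) e = pairInit G' (wl1 G' l' t) e') :
    wl2 G l t e = wl2 G' l' t e' := by
  induction t generalizing e e' with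
  | zero => exact he
  | succ t ih =>
    obtain ⟨p, q⟩ := e
    obtain ⟨p', q'⟩ := e'
    obtain ⟨hpsucc, hqsucc, hadj, heq⟩ := pairInit_eq_pairInit_iff.1 he
    obtain ⟨hp, hpnbr⟩ := Prod.mk.inj hpsucc
    obtain ⟨hq, hqnbr⟩ := Prod.mk.inj hqsucc
    have hpair := ih (p, q) (p', q') (pairInit_eq_pairInit_iff.2 ⟨hp, hq, hadj, heq⟩)
    have hcol := multiset_map_eq_map_of_imp (univ_map_pairInit_eq (huniv t) hq hqnbr)
      fun u _ u' _ h => ih (u, q) (u', q') (pairInit_swap_eq_pairInit_swap_iff.1 h)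
    have hrow := multiset_map_eq_map_of_imp (univ_map_pairInit_eq (huniv t) hp hpnbr)
      fun v _ v' _ h => ih (p, v) (p', v') h
    exact Prod.ext hpair (Prod.ext hcol hrow)

end WeisfeilerLeman

theorem wl2_blind_on_regular_graphs_general {σ : Type u} {V V' : Type v} [Fintype V] [Fintype V']
    {G : SimpleGraph V} {G' : SimpleGraph V'} {l : V → σ} {l' : V' → σ}
    (huniv : ∀ t, (Finset.univ : Finset V).val.map (wl1 G l t) =
      (Finset.univ : Finset V').val.map (wl1 G' l' t)) {e : V × V} {e' : V' × V'}
    (hwl1 : WL1Indist G l G' l' e e') (hadj : G.Adj e.1 e.2 ↔ G'.Adj e'.1 e'.2)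
    (heq : e.1 = e.2 ↔ e'.1 = e'.2) : WL2Indist G l G' l' e e' := fun t =>
  wl2_eq_of_pairInit_wl1_eq huniv t e e'
    (pairInit_eq_pairInit_iff.2 ⟨(hwl1 t).1, (hwl1 t).2, hadj, heq⟩)

/-- 2-WL is blind on regular graphs: any two target links of two `d`-regular unlabeled
graphs on the same number of vertices are 2-WL-indistinguishable. -/
theorem wl2_blind_on_regular_graphs :
    ∀ (V V' : Type v) [Fintype V] [Fintype V']
      (G : SimpleGraph V) (G' : SimpleGraph V') (n d : ℕ),
      Fintype.card V = n → Fintype.card V' = n →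
      G.IsRegularOfDegree d → G'.IsRegularOfDegree d →
      ∀ (e : V × V) (e' : V' × V'),
        IsTargetLink G e → IsTargetLink G' e' →
        WL2Indist G (fun _ => ()) G' (fun _ => ()) e e' := by
  intro V V' _ _ G G' n d hn hn' hG hG' e e' he he'
  have hwl1 := wl1_const_eq_of_isRegularOfDegree hG hG' ()
  exact wl2_blind_on_regular_graphs_general
    (fun t => multiset_map_eq_map_of_card_eq (hn.trans hn'.symm) (hwl1 t))
    (fun t => ⟨hwl1 t e.1 e'.1, hwl1 t e.2 e'.2⟩)
    (iff_of_false he.2 he'.2) (iff_of_false he.1 he'.1)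
end

section
/- (2-FWL is blind on strongly regular graphs, the key claim behind the magic-square counterexample in the proof of Theorem 6.) Let G and G' be strongly regular graphs with the same parameters (n, k, λ, μ), viewed as unlabeled graphs. Then for every target link (p,q) in G (p ≠ q, (p,q) ∉ E) and every target link (p',q') in G' (p' ≠ q', (p',q') ∉ E'), the links (p,q) and (p',q') are 2-FWL-indistinguishable. In particular, within a single strongly regular graph, any two non-adjacent pairs of distinct vertices receive identical 2-FWL colors at every iteration. -/
open scoped Classical

universe u v

/-! A pair coloring that one round of 2-FWL does not split is never split later. For a strongly
regular graph the initial coloring, which records only equality and adjacency, is such a coloring: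
the round counts paths `p, u, q` by the colors of their two steps, these counts are the entries of
products of color class matrices, and the span of `1`, the adjacency matrix and the all-ones matrix
(the Bose–Mesner algebra) is closed under multiplication, with structure constants given by the
parameters. -/

theorem multiset_map_eq_map_of_refines {α β γ δ : Type*} {f : α → γ} {f' : β → γ}
    {g : α → δ} {g' : β → δ} {s : Multiset α} {t : Multiset β}
    (hfg : ∀ a b, f a = f' b → g a = g' b) (h : s.map f = t.map f') :
    s.map g = t.map g' := by
  rw [← Multiset.rel_eq, Multiset.rel_map] at h ⊢
  exact h.mono fun a _ b _ => hfg a b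

section Stability

variable {C : Type*}

/-- The multiset of color pairs `(χ (u, q), χ (p, u))`, `u ∈ V`, which one round of 2-FWL applied
to the pair coloring `χ` attaches to the pair `e = (p, q)`. -/
def pathColors {V : Type*} [Fintype V] (χ : V × V → C) (e : V × V) : Multiset (C × C) :=
  Finset.univ.val.map fun u => (χ (u, e.2), χ (e.1, u))

/-- Two pair colorings, possibly of different graphs, are jointly stable if one round of 2-FWL does
not separate any two pairs of the same color. -/
def JointlyStable {V V' : Type*} [Fintype V] [Fintype V'] (χ : V × V → C) (χ' : V' × V' → C) :
    Prop :=
  ∀ e e', χ e = χ' e' → pathColors χ e = pathColors χ' e'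

theorem JointlyStable.fwl2Indist {V V' : Type v} [Fintype V] [Fintype V'] {σ : Type u}
    {G : SimpleGraph V} {G' : SimpleGraph V'} {l : V → σ} {l' : V' → σ}
    {χ : V × V → C} {χ' : V' × V' → C} (hχ : JointlyStable χ χ')
    (hinit : ∀ e e', χ e = χ' e' → pairInit G l e = pairInit G' l' e')
    {e : V × V} {e' : V' × V'} (he : χ e = χ' e') : FWL2Indist G l G' l' e e' := by
  intro t
  induction t generalizing e e' with
  | zero => exact hinit e e' he
  | succ t ih =>
    refine Prod.ext (ih he) (multiset_map_eq_map_of_refines (fun u u' hu => ?_) (hχ e e' he))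
    obtain ⟨hq, hp⟩ := Prod.ext_iff.mp hu
    exact Prod.ext (ih hq) (ih hp)

end Stability

section ColorClasses

variable {V C : Type*}

/-- The 0/1 matrix of the color class `x` of a pair coloring `χ`. -/
noncomputable def colorMatrix (R : Type*) [Zero R] [One R] (χ : V × V → C) (x : C) :
    Matrix V V R :=
  Matrix.of fun p q => if χ (p, q) = x then 1 else 0

theorem count_pathColors [Fintype V] (R : Type*) [NonAssocSemiring R] (χ : V × V → C)
    (e : V × V) (x y : C) :
    ((pathColors χ e).count (x, y) : R) = (colorMatrix R χ y * colorMatrix R χ x) e.1 e.2 := by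
  simp only [pathColors, Multiset.count_map, Prod.mk.injEq, colorMatrix, Matrix.mul_apply,
    Matrix.of_apply, ite_zero_mul_ite_zero, mul_one, Finset.sum_boole, ← Finset.filter_val,
    Finset.card_val, eq_comm (a := x), eq_comm (a := y), and_comm]

end ColorClasses

section BoseMesner

variable {V R : Type*}

theorem of_one_mul_of_one [Fintype V] [NonAssocSemiring R] :
    (Matrix.of 1 * Matrix.of 1 : Matrix V V R) = (Fintype.card V : R) • Matrix.of 1 := by
  ext p q
  simp [Matrix.mul_apply]

variable {G : SimpleGraph V} [DecidableRel G.Adj]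

theorem adjMatrix_mul_of_one [Fintype V] [NonAssocSemiring R] {k : ℕ}
    (hG : G.IsRegularOfDegree k) :
    G.adjMatrix R * Matrix.of 1 = (k : R) • Matrix.of 1 := by
  ext p q
  simp [SimpleGraph.adjMatrix_mul_apply, hG.degree_eq]

theorem of_one_mul_adjMatrix [Fintype V] [NonAssocSemiring R] {k : ℕ}
    (hG : G.IsRegularOfDegree k) :
    Matrix.of 1 * G.adjMatrix R = (k : R) • Matrix.of 1 := by
  ext p q
  simp [SimpleGraph.mul_adjMatrix_apply, hG.degree_eq]

variable [DecidableEq V]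

variable (G) in
/-- The matrix with entry `a` on the diagonal, `b` on the edges and `c` elsewhere. For strongly
regular `G` these matrices form its Bose–Mesner algebra. -/
def boseMesnerMatrix (a b c : R) : Matrix V V R :=
  Matrix.of fun p q => if p = q then a else if G.Adj p q then b else c

theorem eq_boseMesnerMatrix {M : Matrix V V R} {a b c : R} (hself : ∀ p, M p p = a)
    (hedge : ∀ p q, G.Adj p q → M p q = b) (hnonedge : ∀ p q, p ≠ q → ¬G.Adj p q → M p q = c) :
    M = boseMesnerMatrix G a b c := by
  ext p q
  rw [boseMesnerMatrix, Matrix.of_apply]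
  split_ifs with hpq hadj
  · exact hpq ▸ hself p
  · exact hedge p q hadj
  · exact hnonedge p q hpq hadj

theorem boseMesnerMatrix_apply_congr {V' : Type*} [DecidableEq V'] {G' : SimpleGraph V'}
    [DecidableRel G'.Adj] {p q : V} {p' q' : V'} (heq : p = q ↔ p' = q')
    (hadj : G.Adj p q ↔ G'.Adj p' q') (a b c : R) :
    boseMesnerMatrix G a b c p q = boseMesnerMatrix G' a b c p' q' := by
  simp only [boseMesnerMatrix, Matrix.of_apply, heq, hadj]

theorem boseMesnerMatrix_eq_add [Ring R] (a b c : R) :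
    boseMesnerMatrix G a b c =
      (a - c) • (1 : Matrix V V R) + (b - c) • G.adjMatrix R + c • Matrix.of 1 := by
  symm
  refine eq_boseMesnerMatrix (fun p => ?_) (fun p q hadj => ?_) (fun p q hne hadj => ?_)
  · simp
  · simp [hadj, hadj.ne]
  · simp [hadj, hne]

variable [Fintype V] {n k lam mu : ℕ}

theorem adjMatrix_mul_self_eq_boseMesnerMatrix [Semiring R] (hG : G.IsSRGWith n k lam mu) :
    G.adjMatrix R * G.adjMatrix R = boseMesnerMatrix G (k : R) lam mu := by
  rw [← sq, hG.matrix_eq]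
  simp only [← Nat.cast_smul_eq_nsmul R]
  refine eq_boseMesnerMatrix (fun p => ?_) (fun p q hadj => ?_) (fun p q hne hadj => ?_)
  · simp
  · simp [hadj, hadj.ne]
  · simp [hadj, hne]

/-- The coefficients are the intersection numbers: for instance, an edge `p q` has `lam` common
neighbors `u`, and `k - lam - 1` vertices `u ≠ q` adjacent to `p` but not to `q`. -/
theorem boseMesnerMatrix_mul_boseMesnerMatrix [CommRing R]
    (hG : G.IsSRGWith n k lam mu) (a b c a' b' c' : R) :
    boseMesnerMatrix G a b c * boseMesnerMatrix G a' b' c' =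
      boseMesnerMatrix G
        (a * a' + k * (b * b') + (n - 1 - k) * (c * c'))
        (a * b' + b * a' + lam * (b * b') + (k - lam - 1) * (b * c' + c * b')
          + (n - 2 * k + lam) * (c * c'))
        (a * c' + c * a' + mu * (b * b') + (k - mu) * (b * c' + c * b')
          + (n - 2 * k + mu - 2) * (c * c')) := by
  rw [boseMesnerMatrix_eq_add a, boseMesnerMatrix_eq_add a']
  simp only [add_mul, mul_add, smul_mul_assoc, mul_smul_comm, one_mul, mul_one,
    adjMatrix_mul_of_one hG.regular, of_one_mul_adjMatrix hG.regular, of_one_mul_of_one,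
    adjMatrix_mul_self_eq_boseMesnerMatrix hG, hG.card]
  refine eq_boseMesnerMatrix (fun p => ?_) (fun p q hadj => ?_) (fun p q hne hadj => ?_) <;>
    simp only [boseMesnerMatrix, Matrix.add_apply, Matrix.smul_apply, Matrix.one_apply,
      Matrix.of_apply, SimpleGraph.adjMatrix_apply, Pi.one_apply, smul_eq_mul]
  · simp only [↓reduceIte, SimpleGraph.irrefl]
    ring
  · simp only [hadj, hadj.ne, ↓reduceIte]
    ring
  · simp only [hadj, hne, ↓reduceIte]
    ring

end BoseMesner

section StronglyRegular

variable {V V' : Type v} {G : SimpleGraph V} {G' : SimpleGraph V'} {σ : Type u}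

theorem pairInit_eq_iff {l : V → σ} {l' : V' → σ} {e : V × V} {e' : V' × V'} :
    pairInit G l e = pairInit G' l' e' ↔ l e.1 = l' e'.1 ∧ l e.2 = l' e'.2 ∧
      (G.Adj e.1 e.2 ↔ G'.Adj e'.1 e'.2) ∧ (e.1 = e.2 ↔ e'.1 = e'.2) := by
  unfold pairInit PairColor0
  simp only [Prod.mk.injEq, decide_eq_decide]

theorem of_pairInit_const_eq_boseMesnerMatrix {R : Type*} (s : σ) (f : PairColor0 σ → R) :
    (Matrix.of fun p q => f (pairInit G (fun _ => s) (p, q))) =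
      boseMesnerMatrix G (f (s, s, false, true)) (f (s, s, true, false))
        (f (s, s, false, false)) := by
  refine eq_boseMesnerMatrix (fun p => ?_) (fun p q hadj => ?_) (fun p q hne hadj => ?_)
  · simp [pairInit]
  · simp [pairInit, hadj, hadj.ne]
  · simp [pairInit, hadj, hne]

theorem exists_colorMatrix_pairInit_const_eq_boseMesnerMatrix (R : Type*) [Zero R] [One R]
    (s : σ) (x : PairColor0 σ) :
    ∃ a b c : R, ∀ {V : Type v} (G : SimpleGraph V),
      colorMatrix R (pairInit G fun _ => s) x = boseMesnerMatrix G a b c :=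
  ⟨_, _, _, fun _ => of_pairInit_const_eq_boseMesnerMatrix s fun y => if y = x then 1 else 0⟩

variable [Fintype V] [Fintype V'] {n k lam mu : ℕ}

theorem jointlyStable_pairInit_const (hG : G.IsSRGWith n k lam mu)
    (hG' : G'.IsSRGWith n k lam mu) (s : σ) :
    JointlyStable (pairInit G fun _ => s) (pairInit G' fun _ => s) := by
  intro e e' he
  ext ⟨x, y⟩
  obtain ⟨a, b, c, hx⟩ := exists_colorMatrix_pairInit_const_eq_boseMesnerMatrix ℤ s x
  obtain ⟨a', b', c', hy⟩ := exists_colorMatrix_pairInit_const_eq_boseMesnerMatrix ℤ s y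
  rw [← Nat.cast_inj (R := ℤ), count_pathColors, count_pathColors, hx, hx, hy, hy,
    boseMesnerMatrix_mul_boseMesnerMatrix hG, boseMesnerMatrix_mul_boseMesnerMatrix hG']
  obtain ⟨-, -, hadj, heq⟩ := pairInit_eq_iff.mp he
  exact boseMesnerMatrix_apply_congr heq hadj _ _ _

theorem fwl2_blind_on_strongly_regular_graphs_general (hG : G.IsSRGWith n k lam mu)
    (hG' : G'.IsSRGWith n k lam mu) (s : σ) {e : V × V} {e' : V' × V'}
    (hadj : G.Adj e.1 e.2 ↔ G'.Adj e'.1 e'.2) (heq : e.1 = e.2 ↔ e'.1 = e'.2) :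
    FWL2Indist G (fun _ => s) G' (fun _ => s) e e' :=
  (jointlyStable_pairInit_const hG hG' s).fwl2Indist (fun _ _ h => h)
    (pairInit_eq_iff.mpr ⟨rfl, rfl, hadj, heq⟩)

end StronglyRegular

/-- 2-FWL is blind on strongly regular graphs: any two target links of two strongly
regular unlabeled graphs with the same parameters `(n, k, λ, μ)` are
2-FWL-indistinguishable. -/
theorem fwl2_blind_on_strongly_regular_graphs :
    ∀ (V V' : Type v) [Fintype V] [Fintype V']
      (G : SimpleGraph V) (G' : SimpleGraph V') (n k lam mu : ℕ),
      G.IsSRGWith n k lam mu → G'.IsSRGWith n k lam mu →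
      ∀ (e : V × V) (e' : V' × V'),
        IsTargetLink G e → IsTargetLink G' e' →
        FWL2Indist G (fun _ => ()) G' (fun _ => ()) e e' := by
  intro V V' _ _ G G' n k lam mu hG hG' e e' he he'
  exact fwl2_blind_on_strongly_regular_graphs_general hG hG' () (iff_of_false he.2 he'.2)
    (iff_of_false he.1 he'.1)
end
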